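/- arXiv:1808.04642 — 2 statements merged into one kernel-verified Lean document; each statement's English description precedes it below -/
import Mathlib

section
/- Let (W,U,N) be a polarity, ε an order type over n, R a g-type relation with order type ε, and 1 ≤ i ≤ n with ε(i) = ∂. Suppose that for every j ≠ i the set Y_j ⊆ U^ε(j) is Galois-stable. Then for every X ⊆ W, R⁰[Ȳⁱ_X] = R⁰[Ȳⁱ_{(X↑)↓}]. (Lemma 3.5, item 2(ii).) -/
universe u

/-- For `X ⊆ W`, `up N X = X↑ = {u ∈ U : N x u for all x ∈ X}`. -/
def up {W U : Type u} (N : W → U → Prop) (X : Set W) : Set U := {u | ∀ x ∈ X, N x u}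

/-- For `Y ⊆ U`, `dn N Y = Y↓ = {w ∈ W : N w u for all u ∈ Y}`. -/
def dn {W U : Type u} (N : W → U → Prop) (Y : Set U) : Set W := {w | ∀ u ∈ Y, N w u}

/-- A subset `X ⊆ W` is Galois-stable if `X = (X↑)↓`. -/
def stableW {W U : Type u} (N : W → U → Prop) (X : Set W) : Prop := X = dn N (up N X)

/-- A subset `Y ⊆ U` is Galois-stable if `Y = (Y↓)↑`. -/
def stableU {W U : Type u} (N : W → U → Prop) (Y : Set U) : Prop := Y = up N (dn N Y)

/-- `coordType W U b` is `W` if `b = true` (order type 1) and `U` if `b = false` (order type ∂). -/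
def coordType (W U : Type u) (b : Bool) : Type u := cond b W U

/-- `S⁰[C̄] = {a : (a, b̄) ∈ S for all b̄ ∈ C₁ × ⋯ × Cₙ}`. -/
def rel0 {A : Type u} {n : ℕ} {B : Fin n → Type u} (S : A → (∀ i, B i) → Prop)
    (C : ∀ i, Set (B i)) : Set A :=
  {a | ∀ b : ∀ i, B i, (∀ i, b i ∈ C i) → S a b}

/-- `Sⁱ[A', C̄ⁱ] = {x ∈ B i : (a, b̄ⁱ_x) ∈ S for all a ∈ A' and all b_j ∈ C_j (j ≠ i)}`
(the `i`-th entry of `C` is ignored). -/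
def reli {A : Type u} {n : ℕ} {B : Fin n → Type u} (S : A → (∀ i, B i) → Prop)
    (i : Fin n) (A' : Set A) (C : ∀ j, Set (B j)) : Set (B i) :=
  {x | ∀ a ∈ A', ∀ b : ∀ j, B j, (∀ j, j ≠ i → b j ∈ C j) → S a (Function.update b i x)}

/-- Galois-stability for a subset of `U^ε(i)` (as a subset of `U` or of `W` accordingly). -/
def coordStableG {W U : Type u} (N : W → U → Prop) :
    (b : Bool) → Set (coordType U W b) → Prop
  | true, Y => stableU N Y
  | false, X => stableW N X

/-- `R` is a g-type relation with order type `ε`: `R ⊆ W × U^ε(1) × ⋯ × U^ε(n)` such that the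
sets `R⁰[{ū}]` and `Rⁱ[{w}, {ū}ⁱ]` are all Galois-stable. -/
def isGType {W U : Type u} (N : W → U → Prop) {n : ℕ} (ε : Fin n → Bool)
    (R : W → (∀ i, coordType U W (ε i)) → Prop) : Prop :=
  (∀ v : ∀ i, coordType U W (ε i),
    stableW N (rel0 R fun i => ({v i} : Set (coordType U W (ε i))))) ∧
  (∀ (w : W) (v : ∀ i, coordType U W (ε i)) (i : Fin n),
    coordStableG N (ε i) (reli R i {w} fun j => ({v j} : Set (coordType U W (ε j)))))

/-- The Galois closure on subsets of `U^ε(i)`: `(·↓)↑` on subsets of `U`, `(·↑)↓` on subsets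
of `W`. -/
def coordClG {W U : Type u} (N : W → U → Prop) :
    (b : Bool) → Set (coordType U W b) → Set (coordType U W b)
  | true, Y => up N (dn N Y)
  | false, X => dn N (up N X)

/-!
A point `a` lies in `R⁰[Ȳⁱ_X]` exactly when `X` is contained in every section `Rⁱ[{a}, {v̄}ⁱ]`
with `v_j ∈ Y_j` for `j ≠ i`. A closed set contains `X` if and only if it contains the closure
of `X`, so closed sections do not distinguish `X` from its closure.
-/

section Relation

variable {A : Type u} {n : ℕ} {B : Fin n → Type u}

theorem mem_reli_singleton_iff (S : A → (∀ j, B j) → Prop) (i : Fin n) (a : A) (v : ∀ j, B j)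
    (x : B i) :
    (x ∈ reli S i {a} fun j => {v j}) ↔ S a (Function.update v i x) := by
  constructor
  · exact fun h => h a rfl v fun _ _ => rfl
  · rintro h _ rfl b hb
    have hbv : Function.update b i x = Function.update v i x :=
      Function.update_eq_iff.2 ⟨(Function.update_self ..).symm,
        fun j hj => (hb j hj).trans (Function.update_of_ne hj ..).symm⟩
    rwa [hbv]

theorem mem_rel0_update_iff (S : A → (∀ j, B j) → Prop) (i : Fin n) (Y : ∀ j, Set (B j))
    (X : Set (B i)) (a : A) :
    a ∈ rel0 S (Function.update Y i X) ↔
      ∀ v : ∀ j, B j, (∀ j, j ≠ i → v j ∈ Y j) → X ⊆ reli S i {a} fun j => {v j} := by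
  have mem_update_iff (v : ∀ j, B j) :
      (∀ j, v j ∈ Function.update Y i X j) ↔ v i ∈ X ∧ ∀ j, j ≠ i → v j ∈ Y j :=
    Function.forall_update_iff Y fun j Z => v j ∈ Z
  constructor
  · intro ha v hv x hx
    rw [mem_reli_singleton_iff]
    refine ha _ ((mem_update_iff _).2 ⟨by rwa [Function.update_self], fun j hj => ?_⟩)
    rw [Function.update_of_ne hj]
    exact hv j hj
  · intro h v hv
    obtain ⟨hvi, hvY⟩ := (mem_update_iff v).1 hv
    have hSv := (mem_reli_singleton_iff S i a v (v i)).1 (h v hvY hvi)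
    rwa [Function.update_eq_self] at hSv

theorem rel0_update_closure (S : A → (∀ j, B j) → Prop) (i : Fin n)
    (c : ClosureOperator (Set (B i)))
    (hS : ∀ (a : A) (v : ∀ j, B j), c.IsClosed (reli S i {a} fun j => {v j}))
    (Y : ∀ j, Set (B j)) (X : Set (B i)) :
    rel0 S (Function.update Y i (c X)) = rel0 S (Function.update Y i X) := by
  ext a
  rw [mem_rel0_update_iff, mem_rel0_update_iff]
  exact forall₂_congr fun v _ => (hS a v).closure_le_iff

end Relation

section GaloisClosure

variable {W U : Type u} (N : W → U → Prop)

/-- The Galois closure `coordClG N b` as a closure operator, so that Mathlib's theory of closure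
operators applies uniformly in `b`. -/
def coordClosure : ∀ b : Bool, ClosureOperator (Set (coordType U W b))
  | true => (gc_lowerPolar_upperPolar N).closureOperator
  | false => (gc_upperPolar_lowerPolar N).closureOperator

theorem coordClosure_apply (b : Bool) (X : Set (coordType U W b)) :
    coordClosure N b X = coordClG N b X := by
  cases b <;> rfl

theorem isClosed_coordClosure_iff (b : Bool) (X : Set (coordType U W b)) :
    (coordClosure N b).IsClosed X ↔ coordStableG N b X := by
  cases b <;> exact (coordClosure N _).isClosed_iff.trans eq_comm

theorem gType_rel0_closure_partial_general {A : Type u} {n : ℕ} (ε : Fin n → Bool)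
    (R : A → (∀ j, coordType U W (ε j)) → Prop) (i : Fin n)
    (hR : ∀ (a : A) (v : ∀ j, coordType U W (ε j)),
      coordStableG N (ε i) (reli R i {a} fun j => {v j}))
    (Y : ∀ j, Set (coordType U W (ε j))) (X : Set (coordType U W (ε i))) :
    rel0 R (Function.update Y i X) = rel0 R (Function.update Y i (coordClG N (ε i) X)) := by
  rw [← coordClosure_apply]
  exact (rel0_update_closure R i (coordClosure N (ε i))
    (fun a v => (isClosed_coordClosure_iff N (ε i) _).2 (hR a v)) Y X).symm

end GaloisClosure

/-- Lemma 3.5, item 2(ii): if `ε(i) = ∂` and `Y_j` is Galois-stable for all `j ≠ i`, then for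
every `X ⊆ W`, `R⁰[Ȳⁱ_X] = R⁰[Ȳⁱ_{(X↑)↓}]`. -/
theorem gType_rel0_closure_partial {W U : Type u} (N : W → U → Prop) {n : ℕ} (ε : Fin n → Bool)
    (R : W → (∀ i, coordType U W (ε i)) → Prop) (hR : isGType N ε R)
    (i : Fin n) (hi : ε i = false)
    (Y : ∀ j, Set (coordType U W (ε j)))
    (hY : ∀ j, j ≠ i → coordStableG N (ε j) (Y j))
    (X : Set (coordType U W (ε i))) :
    rel0 R (Function.update Y i X) = rel0 R (Function.update Y i (coordClG N (ε i) X)) :=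
  gType_rel0_closure_partial_general N ε R i (fun w v => hR.2 w v i) Y X
end

section
/- Let (W,U,N) be a polarity, ε an order type over n, R an f-type relation with order type ε, and 1 ≤ i ≤ n with ε(i) = ∂. Let X_j ⊆ W be Galois-stable for every j ≠ i, and let 𝒳 be any family of Galois-stable subsets of W. Then ⋁_{Z ∈ 𝒳} f_R(X̄ⁱ_Z) = f_R(X̄ⁱ_{⋂𝒳}), where the join on the left is computed in the complete lattice of Galois-stable subsets of W. (Proposition 3.7, case f with ε(i) = ∂: f_R turns arbitrary meets in its i-th coordinate into joins.) -/
universe u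

/-- Galois-stability for a subset of `W^ε(i)` (as a subset of `W` or of `U` accordingly). -/
def coordStable {W U : Type u} (N : W → U → Prop) :
    (b : Bool) → Set (coordType W U b) → Prop
  | true, X => stableW N X
  | false, Y => stableU N Y

/-- `R` is an f-type relation with order type `ε`: `R ⊆ U × W^ε(1) × ⋯ × W^ε(n)` such that the
sets `R⁰[{w̄}]` and `Rⁱ[{u}, {w̄}ⁱ]` are all Galois-stable. -/
def isFType {W U : Type u} (N : W → U → Prop) {n : ℕ} (ε : Fin n → Bool)
    (R : U → (∀ i, coordType W U (ε i)) → Prop) : Prop :=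
  (∀ w : ∀ i, coordType W U (ε i),
    stableU N (rel0 R fun i => ({w i} : Set (coordType W U (ε i))))) ∧
  (∀ (u : U) (w : ∀ i, coordType W U (ε i)) (i : Fin n),
    coordStable N (ε i) (reli R i {u} fun j => ({w j} : Set (coordType W U (ε j)))))

/-- The `i`-th entry of `X̄^ε`: `X_i` if `ε(i) = 1` and `X_i↑` if `ε(i) = ∂`. -/
def epsCoordF {W U : Type u} (N : W → U → Prop) :
    (b : Bool) → Set W → Set (coordType W U b)
  | true, X => X
  | false, X => up N X

/-- `f_R(X̄) := (R⁰[X̄^ε])↓`. -/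
def fR {W U : Type u} (N : W → U → Prop) {n : ℕ} (ε : Fin n → Bool)
    (R : U → (∀ i, coordType W U (ε i)) → Prop) (X : Fin n → Set W) : Set W :=
  dn N (rel0 R fun i => epsCoordF N (ε i) (X i))

/-!
Each `R⁰[C̄]` is an intersection of sets `R⁰[{w̄}]`, hence stable, so the join on the left is
`(⋂ Z ∈ 𝒳, R⁰[C̄ⁱ_{Z↑}])↓`. It remains to see that `D ↦ R⁰[C̄ⁱ_D]` takes `(⋂₀ 𝒳)↑` to that
intersection. This map is residuated: `A ⊆ R⁰[C̄ⁱ_D] ↔ D ⊆ Rⁱ[A, C̄ⁱ]`. The residual is stable, as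
it is an intersection of sections of `R`, and `(⋂₀ 𝒳)↑` is the least stable set containing every
`Z↑`.
-/

section Polar

variable {α β : Type*} {r : α → β → Prop}

theorem upperPolar_sInter_of_isExtent {𝒳 : Set (Set α)} (h𝒳 : ∀ Z ∈ 𝒳, Order.IsExtent r Z) :
    upperPolar r (⋂₀ 𝒳) = upperPolar r (lowerPolar r (⋃ Z ∈ 𝒳, upperPolar r Z)) := by
  rw [lowerPolar_iUnion₂, Set.sInter_eq_biInter]
  exact congrArg _ (Set.iInter₂_congr fun Z hZ => (h𝒳 Z hZ).eq.symm)

theorem upperPolar_sInter_subset_iff {𝒳 : Set (Set α)} (h𝒳 : ∀ Z ∈ 𝒳, Order.IsExtent r Z)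
    {T : Set β} (hT : Order.IsIntent r T) :
    upperPolar r (⋂₀ 𝒳) ⊆ T ↔ ∀ Z ∈ 𝒳, upperPolar r Z ⊆ T := by
  rw [upperPolar_sInter_of_isExtent h𝒳, ← Set.iUnion₂_subset_iff]
  exact ⟨(subset_upperPolar_lowerPolar r _).trans, hT.upperPolar_lowerPolar_subset⟩

end Polar

section Relation

variable {A : Type u} {n : ℕ} {B : Fin n → Type u} (S : A → (∀ i, B i) → Prop)

theorem rel0_eq_iInter_singleton (C : ∀ i, Set (B i)) :
    rel0 S C = ⋂ (b : ∀ i, B i) (_ : ∀ i, b i ∈ C i), rel0 S fun i => {b i} := by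
  simp only [rel0, Set.mem_singleton_iff, ← funext_iff, forall_eq]
  ext a
  simp only [Set.mem_ofPred_eq, Set.mem_iInter]

theorem reli_eq_iInter_singleton (i : Fin n) (A' : Set A) (C : ∀ j, Set (B j)) :
    reli S i A' C =
      ⋂ (a ∈ A') (b : ∀ j, B j) (_ : ∀ j, j ≠ i → b j ∈ C j), reli S i {a} fun j => {b j} := by
  ext x
  simp only [reli, Set.mem_ofPred_eq, Set.mem_iInter, Set.mem_singleton_iff, forall_eq]
  refine forall₄_congr fun a _ b _ => ⟨fun h c hc => ?_, fun h => h b fun _ _ => rfl⟩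
  have update_eq : Function.update c i x = Function.update b i x :=
    Function.update_eq_iff.2
      ⟨(Function.update_self ..).symm, fun j hj => by rw [Function.update_of_ne hj, hc j hj]⟩
  rwa [update_eq]

theorem subset_rel0_update_iff (i : Fin n) (A' : Set A) (C : ∀ j, Set (B j)) (D : Set (B i)) :
    A' ⊆ rel0 S (Function.update C i D) ↔ D ⊆ reli S i A' C := by
  constructor
  · intro h x hx a ha b hb
    refine h ha _ fun j => ?_
    obtain rfl | hj := eq_or_ne j i
    · simpa only [Function.update_self] using hx
    · simpa only [Function.update_of_ne hj] using hb j hj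
  · intro h a ha b hb
    have hbi : b i ∈ D := by simpa only [Function.update_self] using hb i
    have hbj (j) (hj : j ≠ i) : b j ∈ C j := by simpa only [Function.update_of_ne hj] using hb j
    simpa only [Function.update_eq_self] using h hbi a ha b hbj

end Relation

section Stable

variable {W U : Type u} {N : W → U → Prop}

theorem stableW_iff_isExtent {X : Set W} : stableW N X ↔ Order.IsExtent N X :=
  eq_comm.trans Order.isExtent_iff.symm

theorem stableU_iff_isIntent {Y : Set U} : stableU N Y ↔ Order.IsIntent N Y :=
  eq_comm.trans Order.isIntent_iff.symm

theorem coordStable_iInter {ι : Sort*} {b : Bool} {C : ι → Set (coordType W U b)}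
    (hC : ∀ k, coordStable N b (C k)) : coordStable N b (⋂ k, C k) := by
  cases b with
  | true => exact stableW_iff_isExtent.2 (.iInter _ fun k => stableW_iff_isExtent.1 (hC k))
  | false => exact stableU_iff_isIntent.2 (.iInter _ fun k => stableU_iff_isIntent.1 (hC k))

theorem epsCoordF_sInter_subset_iff {b : Bool} (hb : b = false) {𝒳 : Set (Set W)}
    (h𝒳 : ∀ Z ∈ 𝒳, stableW N Z) {T : Set (coordType W U b)} (hT : coordStable N b T) :
    epsCoordF N b (⋂₀ 𝒳) ⊆ T ↔ ∀ Z ∈ 𝒳, epsCoordF N b Z ⊆ T := by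
  subst hb
  exact upperPolar_sInter_subset_iff (fun Z hZ => stableW_iff_isExtent.1 (h𝒳 Z hZ))
    (stableU_iff_isIntent.1 hT)

variable {n : ℕ} {ε : Fin n → Bool} {R : U → (∀ i, coordType W U (ε i)) → Prop}

theorem stableU_rel0 (hR : ∀ w : ∀ j, coordType W U (ε j), stableU N (rel0 R fun j => {w j}))
    (C : ∀ j, Set (coordType W U (ε j))) : stableU N (rel0 R C) := by
  rw [rel0_eq_iInter_singleton]
  exact stableU_iff_isIntent.2 (.iInter₂ _ fun w _ => stableU_iff_isIntent.1 (hR w))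

theorem coordStable_reli {i : Fin n}
    (hR : ∀ (u : U) (w : ∀ j, coordType W U (ε j)),
      coordStable N (ε i) (reli R i {u} fun j => {w j}))
    (V : Set U) (C : ∀ j, Set (coordType W U (ε j))) : coordStable N (ε i) (reli R i V C) := by
  rw [reli_eq_iInter_singleton]
  exact coordStable_iInter fun u => coordStable_iInter fun _ =>
    coordStable_iInter fun w => coordStable_iInter fun _ => hR u w

theorem rel0_update_epsCoordF_sInter {i : Fin n} (hi : ε i = false)
    (hR : ∀ (u : U) (w : ∀ j, coordType W U (ε j)),
      coordStable N (ε i) (reli R i {u} fun j => {w j}))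
    (C : ∀ j, Set (coordType W U (ε j))) {𝒳 : Set (Set W)} (h𝒳 : ∀ Z ∈ 𝒳, stableW N Z) :
    rel0 R (Function.update C i (epsCoordF N (ε i) (⋂₀ 𝒳))) =
      ⋂ Z ∈ 𝒳, rel0 R (Function.update C i (epsCoordF N (ε i) Z)) := by
  refine eq_of_forall_le_iff fun V => ?_
  simp only [Set.subset_iInter_iff, subset_rel0_update_iff]
  exact epsCoordF_sInter_subset_iff hi h𝒳 (coordStable_reli hR V C)

theorem fR_update (i : Fin n) (X : Fin n → Set W) (Z : Set W) :
    fR N ε R (Function.update X i Z) =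
      dn N (rel0 R (Function.update (fun j => epsCoordF N (ε j) (X j)) i (epsCoordF N (ε i) Z))) :=
  congrArg (fun C => dn N (rel0 R C))
    (funext (Function.apply_update (fun j => epsCoordF N (ε j)) X i Z))

theorem fR_meets_to_joins_general
    (hR₀ : ∀ w : ∀ j, coordType W U (ε j), stableU N (rel0 R fun j => {w j}))
    {i : Fin n} (hRᵢ : ∀ (u : U) (w : ∀ j, coordType W U (ε j)),
      coordStable N (ε i) (reli R i {u} fun j => {w j}))
    (hi : ε i = false) (X : Fin n → Set W) {𝒳 : Set (Set W)} (h𝒳 : ∀ Z ∈ 𝒳, stableW N Z) :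
    dn N (up N (⋃ Z ∈ 𝒳, fR N ε R (Function.update X i Z))) =
      fR N ε R (Function.update X i (⋂₀ 𝒳)) := by
  let C (Z : Set W) :=
    Function.update (fun j => epsCoordF N (ε j) (X j)) i (epsCoordF N (ε i) Z)
  have up_dn_rel0 (Z : Set W) : up N (dn N (rel0 R (C Z))) = rel0 R (C Z) :=
    (stableU_rel0 hR₀ _).symm
  calc dn N (up N (⋃ Z ∈ 𝒳, fR N ε R (Function.update X i Z)))
      = dn N (up N (⋃ Z ∈ 𝒳, dn N (rel0 R (C Z)))) := by simp only [fR_update, C]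
    _ = dn N (⋂ Z ∈ 𝒳, up N (dn N (rel0 R (C Z)))) := congrArg (dn N) (upperPolar_iUnion₂ N _)
    _ = dn N (⋂ Z ∈ 𝒳, rel0 R (C Z)) := by simp only [up_dn_rel0]
    _ = dn N (rel0 R (C (⋂₀ 𝒳))) := by rw [rel0_update_epsCoordF_sInter hi hRᵢ _ h𝒳]
    _ = fR N ε R (Function.update X i (⋂₀ 𝒳)) := (fR_update i X _).symm

end Stable

/-- Proposition 3.7, case `f` with `ε(i) = ∂`: `f_R` turns arbitrary meets in its `i`-th
coordinate into joins: `⋁_{Z ∈ 𝒳} f_R(X̄ⁱ_Z) = f_R(X̄ⁱ_{⋂𝒳})`. -/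
theorem fR_meets_to_joins {W U : Type u} (N : W → U → Prop) {n : ℕ} (ε : Fin n → Bool)
    (R : U → (∀ i, coordType W U (ε i)) → Prop) (hR : isFType N ε R)
    (i : Fin n) (hi : ε i = false)
    (X : Fin n → Set W) (hX : ∀ j, j ≠ i → stableW N (X j))
    (𝒳 : Set (Set W)) (h𝒳 : ∀ Z ∈ 𝒳, stableW N Z) :
    dn N (up N (⋃ Z ∈ 𝒳, fR N ε R (Function.update X i Z)))
      = fR N ε R (Function.update X i (⋂₀ 𝒳)) :=
  fR_meets_to_joins_general hR.1 (hR.2 · · i) hi X h𝒳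
end
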